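/- arXiv:1612.02960 — 2 statements merged into one kernel-verified Lean document; each statement's English description precedes it below -/
import Mathlib

section
/- (Selberg's lemma) Let F be a field of characteristic zero, n a natural number, and G a finitely generated subgroup of the general linear group GL(n, F). Then G has a torsion-free normal subgroup of finite index. -/
/-!
The entries of finitely many generators and of their inverses lie in a subring `A` that is finitely
generated over `ℤ`. Such a ring is Jacobson with finite residue fields, so `A` has two maximal
ideals whose residue fields are finite of distinct characteristics `p` and `p'`, and the two
reduction maps on `GL(n, A)` have kernels of finite index.

If `g` reduces to `1` modulo a maximal ideal `m` and `g ^ q = 1`, then `g - 1` is annihilated by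
`1 + g + ⋯ + g ^ (q - 1)`, which reduces to the scalar `q` modulo `m`; when `q ∉ m` this matrix has
nonzero determinant, hence `g = 1`. Reduction modulo the first ideal thus excludes every torsion
element in its kernel except those of `p`-power order, and reduction modulo the second excludes
these.
-/

section VirtuallyTorsionFree

variable {G H K : Type*} [Group G] [Group H] [Group K]

/-- A group is virtually torsion-free if it has a torsion-free subgroup of finite index. We ask for
a normal one, which is no restriction since the normal core of a subgroup of finite index again has
finite index. Torsion-free means that only `1` has finite order; for noncommutative groups
`IsMulTorsionFree`, which asks for unique roots, is stronger. -/
def IsVirtuallyTorsionFree (G : Type*) [Group G] : Prop :=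
  ∃ N : Subgroup G, N.Normal ∧ N.FiniteIndex ∧ ∀ x ∈ N, IsOfFinOrder x → x = 1

theorem IsVirtuallyTorsionFree.of_injective (hH : IsVirtuallyTorsionFree H) {φ : G →* H}
    (hφ : Function.Injective φ) : IsVirtuallyTorsionFree G := by
  obtain ⟨N, hN, hindex, htf⟩ := hH
  refine ⟨N.comap φ, hN.comap φ, ⟨?_⟩, fun x hx hfin ↦ hφ ?_⟩
  · rw [Subgroup.index_comap]
    exact mt Subgroup.index_eq_zero_of_relIndex_eq_zero hindex.index_ne_zero
  · rw [map_one]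
    exact htf _ hx (φ.isOfFinOrder hfin)

theorem IsVirtuallyTorsionFree.of_le_range (hH : IsVirtuallyTorsionFree H) {φ : H →* K}
    (hφ : Function.Injective φ) {L : Subgroup K} (hL : L ≤ φ.range) : IsVirtuallyTorsionFree L :=
  hH.of_injective
    (φ := (MonoidHom.ofInjective hφ).symm.toMonoidHom.comp (Subgroup.inclusion hL))
    ((MonoidHom.ofInjective hφ).symm.injective.comp (Subgroup.inclusion_injective hL))

end VirtuallyTorsionFree

section JacobsonRing

theorem isJacobsonRing_of_dimensionLEOne {A : Type*} [CommRing A] [Ring.DimensionLEOne A]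
    (h : (⊥ : Ideal A).jacobson = ⊥) : IsJacobsonRing A := by
  refine isJacobsonRing_iff_prime_eq.2 fun P hP ↦ ?_
  obtain rfl | hP0 := eq_or_ne P ⊥
  · exact h
  · have := hP.isMaximal hP0
    exact Ideal.jacobson_eq_self_of_isMaximal

instance isJacobsonRing_int : IsJacobsonRing ℤ := by
  refine isJacobsonRing_of_dimensionLEOne (le_bot_iff.1 fun x hx ↦ ?_)
  have hunit : IsUnit (x * x + 1) := Ideal.mem_jacobson_bot.1 hx x
  have hsq : x * x = 0 := by
    rcases Int.isUnit_iff.1 hunit with h | h <;> nlinarith [mul_self_nonneg x]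
  exact mul_self_eq_zero.1 hsq

theorem exists_isMaximal_notMem {A : Type*} [CommRing A] [IsReduced A] [IsJacobsonRing A] {a : A}
    (ha : a ≠ 0) : ∃ m : Ideal A, m.IsMaximal ∧ a ∉ m := by
  by_contra! hall
  have hmem : a ∈ (⊥ : Ideal A).jacobson := Ideal.mem_sInf.2 fun {J} hJ ↦ hall J hJ.2
  rw [IsJacobsonRing.out ‹_› Ideal.isRadical_bot] at hmem
  exact ha hmem

theorem finite_of_finiteType_int (K : Type*) [Field K] [Algebra.FiniteType ℤ K] : Finite K := by
  have : Module.Finite ℤ K := finite_of_finite_type_of_isJacobsonRing ℤ K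
  have hker : ¬ Function.Injective (algebraMap ℤ K) := fun h ↦
    Int.not_isField (isField_of_isIntegral_of_isField h (Field.toIsField K))
  obtain ⟨a, ha, ha0⟩ : ∃ a : ℤ, algebraMap ℤ K a = 0 ∧ a ≠ 0 := by
    simpa only [injective_iff_map_eq_zero, not_forall, exists_prop] using hker
  refine Module.finite_of_fg_torsion K fun x ↦ ⟨⟨a, mem_nonZeroDivisors_of_ne_zero ha0⟩, ?_⟩
  rw [Submonoid.mk_smul, Algebra.smul_def, ha, zero_mul]

theorem finite_quotient_of_finiteType_int {A : Type*} [CommRing A] [Algebra.FiniteType ℤ A]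
    (m : Ideal A) [m.IsMaximal] : Finite (A ⧸ m) := by
  let := Ideal.Quotient.field m
  have := Algebra.FiniteType.of_surjective (Ideal.Quotient.mk m).toIntAlgHom
    Ideal.Quotient.mk_surjective
  exact finite_of_finiteType_int (A ⧸ m)

end JacobsonRing

section Reduction

open Matrix

variable {n A B B' : Type*} [Fintype n] [DecidableEq n] [CommRing A] [CommRing B] [CommRing B']

theorem map_det_geomSum_of_map_eq_one {f : A →+* B} {M : Matrix n n A} (hM : f.mapMatrix M = 1)
    (q : ℕ) : f (∑ i ∈ Finset.range q, M ^ i).det = (q : B) ^ Fintype.card n := by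
  have hsum : f.mapMatrix (∑ i ∈ Finset.range q, M ^ i) = (q : B) • 1 := by
    simp only [map_sum, map_pow, hM, one_pow, Finset.sum_const, Finset.card_range,
      Nat.cast_smul_eq_nsmul]
  rw [RingHom.map_det, hsum, det_smul, det_one, mul_one]

theorem eq_one_of_pow_eq_one_of_map_eq_one [NoZeroDivisors A] [IsReduced B] {f : A →+* B}
    {g : GL n A} (hg : GeneralLinearGroup.map f g = 1) {q : ℕ} (hq : (q : B) ≠ 0)
    (h : g ^ q = 1) : g = 1 := by
  let S : Matrix n n A := ∑ i ∈ Finset.range q, g.val ^ i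
  have hdet : S.det ≠ 0 := fun h0 ↦ pow_ne_zero (Fintype.card n) hq <| by
    rw [← map_det_geomSum_of_map_eq_one (congrArg Units.val hg) q, h0, map_zero]
  have hS : IsRegular S := isRegular_of_isLeftRegular_det (IsRegular.of_ne_zero hdet).left
  have hmul : (g.val - 1) * S = 0 := by
    rw [mul_geom_sum, ← Units.val_pow_eq_pow_val, h, Units.val_one, sub_self]
  exact Units.ext (sub_eq_zero.1 (hS.right.mul_right_eq_zero_iff.1 hmul))

theorem eq_one_of_isOfFinOrder_of_map_eq_one [NoZeroDivisors A] [IsReduced B] [Nontrivial B]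
    [IsReduced B'] {f : A →+* B} {f' : A →+* B'} (p : ℕ) [CharP B p] (hp : (p : B') ≠ 0)
    {g : GL n A} (hg : GeneralLinearGroup.map f g = 1) (hg' : GeneralLinearGroup.map f' g = 1)
    (hfin : IsOfFinOrder g) : g = 1 := by
  obtain ⟨k, hk, hgk⟩ := isOfFinOrder_iff_pow_eq_one.1 hfin
  obtain ⟨e, b, hb, rfl⟩ :=
    Nat.exists_eq_pow_mul_and_not_dvd hk.ne' p (CharP.char_ne_one B p)
  have hgpow : g ^ p ^ e = 1 := by
    refine eq_one_of_pow_eq_one_of_map_eq_one (f := f) (q := b) ?_ ?_ ?_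
    · rw [map_pow, hg, one_pow]
    · rwa [Ne, CharP.cast_eq_zero_iff B p]
    · rw [← pow_mul, hgk]
  refine eq_one_of_pow_eq_one_of_map_eq_one hg' ?_ hgpow
  rw [Nat.cast_pow]
  exact pow_ne_zero e hp

theorem isVirtuallyTorsionFree_GL_of_finiteType_int (n A : Type*) [Fintype n] [DecidableEq n]
    [CommRing A] [IsDomain A] [CharZero A] [Algebra.FiniteType ℤ A] :
    IsVirtuallyTorsionFree (GL n A) := by
  have : IsJacobsonRing A := isJacobsonRing_of_finiteType (A := ℤ)
  obtain ⟨m, hm⟩ := Ideal.exists_maximal A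
  have := finite_quotient_of_finiteType_int m
  obtain ⟨p, hp⟩ := CharP.exists (A ⧸ m)
  have hp0 : (p : A) ≠ 0 := Nat.cast_ne_zero.2 (CharP.char_ne_zero_of_finite (A ⧸ m) p)
  obtain ⟨m', hm', hpm'⟩ := exists_isMaximal_notMem hp0
  have := finite_quotient_of_finiteType_int m'
  have hp' : (p : A ⧸ m') ≠ 0 := by
    rwa [← map_natCast (Ideal.Quotient.mk m'), Ne, Ideal.Quotient.eq_zero_iff_mem]
  let π := GeneralLinearGroup.map (n := n) (Ideal.Quotient.mk m)
  let π' := GeneralLinearGroup.map (n := n) (Ideal.Quotient.mk m')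
  exact ⟨π.ker ⊓ π'.ker, inferInstance, inferInstance, fun _ hg hfin ↦
    eq_one_of_isOfFinOrder_of_map_eq_one p hp' hg.1 hg.2 hfin⟩

end Reduction

section Descent

open Matrix

theorem mem_range_unitsMap_of_injective {M N : Type*} [Monoid M] [Monoid N] {φ : M →* N}
    (hφ : Function.Injective φ) {u : Nˣ} (hu : u.val ∈ Set.range φ) (hu' : u⁻¹.val ∈ Set.range φ) :
    u ∈ (Units.map φ).range := by
  obtain ⟨a, ha⟩ := hu
  obtain ⟨b, hb⟩ := hu'
  exact ⟨⟨a, b, hφ (by simp [ha, hb]), hφ (by simp [ha, hb])⟩, Units.ext ha⟩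

variable {n R S : Type*} [Fintype n] [DecidableEq n] [CommRing R] [CommRing S]

theorem map_GL_injective {f : R →+* S} (hf : Function.Injective f) :
    Function.Injective (GeneralLinearGroup.map (n := n) f) :=
  Units.map_injective (map_injective hf)

theorem exists_fg_subalgebra_le_range_map_GL (k : Type*) [CommRing k] [Algebra k R]
    {G : Subgroup (GL n R)} (hG : G.FG) :
    ∃ A : Subalgebra k R,
      A.FG ∧ G ≤ (GeneralLinearGroup.map (n := n) A.val.toRingHom).range := by
  obtain ⟨gens, rfl⟩ := hG
  let entries (M : Matrix n n R) : Set R := Set.range fun ij : n × n ↦ M ij.1 ij.2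
  let E : Set R := ⋃ s ∈ gens, entries s.val ∪ entries s⁻¹.val
  have hE : E.Finite :=
    gens.finite_toSet.biUnion fun _ _ ↦ (Set.finite_range _).union (Set.finite_range _)
  have lift_matrix {M : Matrix n n R} (hM : entries M ⊆ E) :
      M ∈ Set.range (Algebra.adjoin k E).val.toRingHom.mapMatrix :=
    ⟨of fun i j ↦ ⟨M i j, Algebra.subset_adjoin (hM ⟨(i, j), rfl⟩)⟩, by ext; rfl⟩
  refine ⟨Algebra.adjoin k E, Subalgebra.fg_def.2 ⟨E, hE, rfl⟩,
    (Subgroup.closure_le _).2 fun s hs ↦ ?_⟩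
  have hsE : entries s.val ∪ entries s⁻¹.val ⊆ E :=
    Set.subset_biUnion_of_mem (u := fun s : GL n R ↦ entries s.val ∪ entries s⁻¹.val) hs
  exact mem_range_unitsMap_of_injective (map_injective Subtype.val_injective)
    (lift_matrix (Set.subset_union_left.trans hsE)) (lift_matrix (Set.subset_union_right.trans hsE))

end Descent

theorem selberg_lemma_general {n R : Type*} [Fintype n] [DecidableEq n] [CommRing R] [IsDomain R]
    [CharZero R] {G : Subgroup (Matrix.GeneralLinearGroup n R)} (hG : G.FG) :
    IsVirtuallyTorsionFree G := by
  obtain ⟨A, hA, hGA⟩ := exists_fg_subalgebra_le_range_map_GL ℤ hG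
  have : Algebra.FiniteType ℤ A := A.fg_iff_finiteType.1 hA
  exact (isVirtuallyTorsionFree_GL_of_finiteType_int n A).of_le_range
    (map_GL_injective Subtype.val_injective) hGA

/-- **Selberg's lemma**: over a field of characteristic zero, every finitely
generated subgroup of `GL(n, F)` has a torsion-free normal subgroup of
finite index. -/
theorem selberg_lemma (F : Type*) [Field F] [CharZero F] (n : ℕ)
    (G : Subgroup (Matrix.GeneralLinearGroup (Fin n) F)) (hG : G.FG) :
    ∃ N : Subgroup G, N.Normal ∧ N.index ≠ 0 ∧
      ∀ x ∈ N, IsOfFinOrder x → x = 1 := by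
  obtain ⟨N, hN, hindex, htf⟩ := selberg_lemma_general hG
  exact ⟨N, hN, hindex.index_ne_zero, htf⟩
end

section
/- (Parabolic and hyperbolic cases) For all integers a, b, c ≥ 2 with 1/a + 1/b + 1/c ≤ 1 (equivalently b·c + a·c + a·b ≤ a·b·c), the triangle group T(a,b,c) is an infinite group. -/
/-- Relator set of the triangle group `T(a,b,c)`: the relators `x^a`, `y^b`, `z^c`
and `x·y·z` in the free group on three generators `x, y, z`. -/
def TriangleRels (a b c : ℕ) : Set (FreeGroup (Fin 3)) :=
  {FreeGroup.of 0 ^ a, FreeGroup.of 1 ^ b, FreeGroup.of 2 ^ c,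
    FreeGroup.of 0 * FreeGroup.of 1 * FreeGroup.of 2}

/-- The triangle group `T(a,b,c)`. -/
abbrev TriangleGroup (a b c : ℕ) : Type :=
  PresentedGroup (TriangleRels a b c)

/-!
Choose `X`, `Y` in `SL₂(ℂ)` with `tr X = 2 cos (π / a)`, `tr Y = 2 cos (π / b)` and
`tr (X Y) = 2 cos (π - π / c)`. By Cayley–Hamilton, `g ^ n = S_{n-1}(t) g - S_{n-2}(t)` for `g` of
determinant one and trace `t`, where the `S_n` are the rescaled Chebyshev polynomials. Hence `X`,
`Y`, `X Y` have orders dividing `a`, `b`, `c` modulo the center, and `T(a,b,c)` maps to `PSL₂(ℂ)`.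
By Fricke's identity `tr ⁅X, Y⁆ = (tr X)² + (tr Y)² + (tr XY)² - tr X tr Y tr XY - 2`, and the
condition `π / a + π / b + π / c ≤ π` makes this real number at least `2`. There every `S_n` is
positive, so no positive power of `⁅X, Y⁆` is central unless `⁅X, Y⁆ = 1`, which is excluded by
taking `X` and `Y` not to commute.
-/

open Polynomial
open scoped MatrixGroups Real commutatorElement

namespace TriangleGroup

variable {G : Type*} [Group G] {a b c : ℕ} {x y : G}

/-- The universal property of the triangle group: elements `x`, `y` with `x ^ a = y ^ b = 1` and
`(x * y) ^ c = 1` determine a homomorphism out of `T(a,b,c)`, the third generator being sent to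
`(x * y)⁻¹`. -/
def lift (hx : x ^ a = 1) (hy : y ^ b = 1) (hxy : (x * y) ^ c = 1) : TriangleGroup a b c →* G :=
  PresentedGroup.toGroup (f := ![x, y, (x * y)⁻¹]) <| by
    have hinv : (y⁻¹ * x⁻¹) ^ c = 1 := by rw [← mul_inv_rev, inv_pow, hxy, inv_one]
    rintro r (rfl | rfl | rfl | rfl) <;> simp [hx, hy, hinv]

theorem infinite_of_not_isOfFinOrder_commutator (hx : x ^ a = 1) (hy : y ^ b = 1)
    (hxy : (x * y) ^ c = 1) (h : ¬IsOfFinOrder ⁅x, y⁆) : Infinite (TriangleGroup a b c) := by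
  refine not_finite_iff_infinite.mp fun _ => h ?_
  have hcomm : lift hx hy hxy ⁅(PresentedGroup.of 0 : TriangleGroup a b c),
      (PresentedGroup.of 1 : TriangleGroup a b c)⁆ = ⁅x, y⁆ := by
    simp [lift, map_commutatorElement]
  exact hcomm ▸ (lift hx hy hxy).isOfFinOrder (isOfFinOrder_of_finite _)

end TriangleGroup

section CommRing

variable {R : Type*} [CommRing R]

theorem matrix_sq_eq_trace_smul_sub_one {M : Matrix (Fin 2) (Fin 2) R}
    (hM : M.det = 1) : M ^ 2 = M.trace • M - 1 := by
  nontriviality R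
  have h := M.aeval_self_charpoly
  simp only [Matrix.charpoly_fin_two, hM, map_add, map_sub, map_mul, map_pow, aeval_X, aeval_C,
    map_one, ← Algebra.smul_def] at h
  rw [← sub_eq_zero, ← h]
  abel

theorem matrix_pow_eq_chebyshev_eval_smul_sub {M : Matrix (Fin 2) (Fin 2) R}
    (hM : M.det = 1) (n : ℕ) :
    M ^ n = (Chebyshev.S R (n - 1)).eval M.trace • M -
      (Chebyshev.S R (n - 2)).eval M.trace • 1 := by
  induction n with
  | zero => simp
  | succ n ih =>
    have hS : (Chebyshev.S R n).eval M.trace =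
        M.trace * (Chebyshev.S R (n - 1)).eval M.trace - (Chebyshev.S R (n - 2)).eval M.trace := by
      rw [Chebyshev.S_eq, eval_sub, eval_mul, eval_X]
    rw [pow_succ, ih, sub_mul, smul_mul_assoc, ← sq, matrix_sq_eq_trace_smul_sub_one hM,
      smul_mul_assoc, one_mul, Nat.cast_succ, add_sub_cancel_right, hS,
      show (n + 1 - 2 : ℤ) = n - 1 by ring]
    module

theorem SL2_pow_mem_center_iff [IsDomain R] {g : SL(2, R)} {n : ℕ} :
    g ^ n ∈ Subgroup.center SL(2, R) ↔
      (Chebyshev.S R (n - 1)).eval g.val.trace = 0 ∨ g ∈ Subgroup.center SL(2, R) := by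
  have hcomm (h : SL(2, R)) : h * g ^ n = g ^ n * h ↔
      (Chebyshev.S R (n - 1)).eval g.val.trace = 0 ∨ h * g = g * h := by
    have hval {g h : SL(2, R)} : g = h ↔ g.val - h.val = 0 :=
      Subtype.ext_iff.trans sub_eq_zero.symm
    rw [hval, hval, ← smul_eq_zero]
    simp only [Matrix.SpecialLinearGroup.coe_mul, Matrix.SpecialLinearGroup.coe_pow,
      matrix_pow_eq_chebyshev_eval_smul_sub g.det_coe n, mul_sub, sub_mul, mul_smul_comm,
      smul_mul_assoc, mul_one, one_mul, sub_sub_sub_cancel_right, smul_sub]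
  simp only [Subgroup.mem_center_iff, hcomm, forall_or_left]

theorem chebyshev_S_eval_pos [LinearOrder R] [IsStrictOrderedRing R] {t : R}
    (ht : 2 ≤ t) (n : ℕ) : 0 < (Chebyshev.S R n).eval t := by
  suffices h : 0 ≤ (Chebyshev.S R (n - 1)).eval t ∧
      (Chebyshev.S R (n - 1)).eval t < (Chebyshev.S R n).eval t from h.1.trans_lt h.2
  induction n with
  | zero => simp
  | succ n ih =>
    have hmul : 2 * (Chebyshev.S R n).eval t ≤ t * (Chebyshev.S R n).eval t :=
      mul_le_mul_of_nonneg_right ht (ih.1.trans ih.2.le)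
    rw [Nat.cast_succ, add_sub_cancel_right, Chebyshev.S_add_one, eval_sub, eval_mul, eval_X]
    constructor <;> linarith

theorem matrix_trace_mul_mul_adjugate_mul_adjugate (M N : Matrix (Fin 2) (Fin 2) R) :
    (M * N * M.adjugate * N.adjugate).trace =
      N.det * M.trace ^ 2 + M.det * N.trace ^ 2 + (M * N).trace ^ 2 -
        M.trace * N.trace * (M * N).trace - 2 * M.det * N.det := by
  rw [M.eta_fin_two, N.eta_fin_two]
  simp only [Matrix.adjugate_fin_two_of, Matrix.mul_fin_two, Matrix.trace_fin_two_of,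
    Matrix.det_fin_two_of]
  ring

theorem SL2_trace_commutator (g h : SL(2, R)) :
    (⁅g, h⁆ : SL(2, R)).val.trace = g.val.trace ^ 2 + h.val.trace ^ 2 + (g * h).val.trace ^ 2 -
      g.val.trace * h.val.trace * (g * h).val.trace - 2 := by
  simpa [commutatorElement_def] using matrix_trace_mul_mul_adjugate_mul_adjugate g.val h.val

theorem exists_SL2_trace_eq_and_trace_mul_eq (s t : R) (ζ : Rˣ) :
    ∃ g h : SL(2, R), g.val.trace = s ∧ h.val.trace = t ∧ (g * h).val.trace = ζ + ↑ζ⁻¹ ∧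
      (Commute g h → ζ⁻¹ = ζ) := by
  let g : SL(2, R) := ⟨!![s, -1; 1, 0], by simp⟩
  let h : SL(2, R) := ⟨!![0, ζ; -↑ζ⁻¹, t], by simp⟩
  have hgh : (g * h).val = !![(↑ζ⁻¹ : R), s * ζ - t; 0, ζ] := by
    rw [Matrix.SpecialLinearGroup.coe_mul]
    simp [g, h, sub_eq_add_neg]
  have hhg : (h * g).val = !![(ζ : R), 0; t - ↑ζ⁻¹ * s, ↑ζ⁻¹] := by
    rw [Matrix.SpecialLinearGroup.coe_mul]
    simp [g, h, sub_eq_neg_add]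
  refine ⟨g, h, by simp [g, Matrix.trace_fin_two], by simp [h, Matrix.trace_fin_two],
    by rw [hgh, Matrix.trace_fin_two_of, add_comm], fun hcomm => Units.ext ?_⟩
  simpa [hgh, hhg] using congrArg (fun M : SL(2, R) => M.val 0 0) hcomm.eq

end CommRing

theorem one_add_two_mul_cos_mul_cos_mul_cos_le {α β γ : ℝ} (hα : 0 ≤ α) (hβ : 0 ≤ β)
    (hαβγ : α + β ≤ γ) (hγ : γ ≤ π) :
    1 + 2 * Real.cos α * Real.cos β * Real.cos γ ≤
      Real.cos α ^ 2 + Real.cos β ^ 2 + Real.cos γ ^ 2 := by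
  have hadd : Real.cos γ ≤ Real.cos (α + β) :=
    Real.cos_le_cos_of_nonneg_of_le_pi (by positivity) hγ hαβγ
  have hsub : Real.cos γ ≤ Real.cos (α - β) := by
    rw [← Real.cos_abs (α - β)]
    exact Real.cos_le_cos_of_nonneg_of_le_pi (abs_nonneg _) hγ
      (abs_le.2 ⟨by linarith, by linarith⟩)
  have hfactor : (Real.cos (α + β) - Real.cos γ) * (Real.cos (α - β) - Real.cos γ) =
      Real.cos α ^ 2 + Real.cos β ^ 2 + Real.cos γ ^ 2 -
        (1 + 2 * Real.cos α * Real.cos β * Real.cos γ) := by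
    rw [Real.cos_add, Real.cos_sub]
    linear_combination (Real.cos β ^ 2 - 1) * Real.sin_sq_add_cos_sq α -
      Real.sin α ^ 2 * Real.sin_sq_add_cos_sq β
  linarith [mul_nonneg (sub_nonneg.2 hadd) (sub_nonneg.2 hsub)]

theorem PSL2_pow_eq_one_of_trace_eq_two_mul_cos {g : SL(2, ℂ)} {θ : ℝ}
    (hg : g.val.trace = 2 * Complex.cos θ) (hθ : Real.sin θ ≠ 0) {n : ℕ}
    (hn : Real.sin (n * θ) = 0) : (g : PSL(2, ℂ)) ^ n = 1 := by
  have hsin : Complex.sin θ ≠ 0 := mod_cast hθ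
  have hS : (Chebyshev.S ℂ (n - 1)).eval g.val.trace * Complex.sin θ = 0 := by
    rw [hg, Chebyshev.S_two_mul_complex_cos]
    push_cast
    rw [sub_add_cancel]
    exact_mod_cast hn
  rw [← QuotientGroup.mk_pow, QuotientGroup.eq_one_iff]
  exact SL2_pow_mem_center_iff.2 (.inl ((mul_eq_zero.1 hS).resolve_right hsin))

theorem PSL2_not_isOfFinOrder_of_two_le_trace {g : SL(2, ℂ)} {t : ℝ} (hg : g.val.trace = t)
    (ht : 2 ≤ t) (hg1 : g ≠ 1) : ¬IsOfFinOrder (g : PSL(2, ℂ)) := by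
  intro hfin
  obtain ⟨n, hn, hpow⟩ := isOfFinOrder_iff_pow_eq_one.1 hfin
  rw [← QuotientGroup.mk_pow, QuotientGroup.eq_one_iff, SL2_pow_mem_center_iff, hg,
    ← Chebyshev.complex_ofReal_eval_S, Complex.ofReal_eq_zero] at hpow
  obtain ⟨m, rfl⟩ := Nat.exists_eq_add_of_lt hn
  have hS := chebyshev_S_eval_pos ht m
  have hcenter := hpow.resolve_left (by simpa using hS.ne')
  obtain ⟨r, hr, hgr⟩ := Matrix.SpecialLinearGroup.mem_center_iff.1 hcenter
  have hr2 : 2 * r = t := by rw [← hg, ← hgr]; simp [two_mul]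
  rw [Fintype.card_fin, sq_eq_one_iff] at hr
  obtain rfl | rfl := hr
  · exact hg1 (Subtype.val_injective (by simpa using hgr.symm))
  · have : 2 * (-1) = t := mod_cast hr2
    linarith

theorem exists_SL2_trace_eq_two_mul_cos {α β γ : ℝ} (hα : 0 ≤ α) (hβ : 0 ≤ β) (hαβγ : α + β ≤ γ)
    (hγ : γ ∈ Set.Ioo 0 π) :
    ∃ g h : SL(2, ℂ), g.val.trace = 2 * Complex.cos α ∧ h.val.trace = 2 * Complex.cos β ∧
      (g * h).val.trace = 2 * Complex.cos γ ∧ ¬IsOfFinOrder ((⁅g, h⁆ : SL(2, ℂ)) : PSL(2, ℂ)) := by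
  let ζ : ℂˣ := Units.mk0 (Complex.exp (γ * Complex.I)) (Complex.exp_ne_zero _)
  have hζ : (ζ + ↑ζ⁻¹ : ℂ) = 2 * Complex.cos γ := by
    simp [ζ, Complex.two_cos, ← Complex.exp_neg]
  have hζinv : ζ⁻¹ ≠ ζ := by
    intro hinv
    have hexp : Complex.exp (-γ * Complex.I) = Complex.exp (γ * Complex.I) := by
      simpa [ζ, ← Complex.exp_neg] using congrArg Units.val hinv
    have hsin : 2 * Complex.sin γ = 0 := by rw [Complex.two_sin, hexp, sub_self, zero_mul]
    have hpos := Real.sin_pos_of_mem_Ioo hγ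
    exact hpos.ne' (by exact_mod_cast (mul_eq_zero_iff_left two_ne_zero).1 hsin)
  obtain ⟨g, h, hg, hh, hgh, hcomm⟩ :=
    exists_SL2_trace_eq_and_trace_mul_eq (2 * Complex.cos α) (2 * Complex.cos β) ζ
  rw [hζ] at hgh
  refine ⟨g, h, hg, hh, hgh, PSL2_not_isOfFinOrder_of_two_le_trace
    (t := 4 * (Real.cos α ^ 2 + Real.cos β ^ 2 + Real.cos γ ^ 2 -
      2 * Real.cos α * Real.cos β * Real.cos γ) - 2) ?_ ?_ ?_⟩
  · rw [SL2_trace_commutator, hg, hh, hgh]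
    push_cast
    ring
  · linarith [one_add_two_mul_cos_mul_cos_mul_cos_le hα hβ hαβγ hγ.2.le]
  · exact fun h1 => hζinv (hcomm (commutatorElement_eq_one_iff_commute.1 h1))

theorem pi_div_add_pi_div_le {a b c : ℕ} (ha : 0 < a) (hb : 0 < b) (hc : 0 < c)
    (h : b * c + a * c + a * b ≤ a * b * c) :
    π / a + π / b ≤ π - π / c := by
  have hsum : π / a + π / b + π / c =
      π * ((b * c + a * c + a * b) / (a * b * c)) := by field_simp
  have hle : (b * c + a * c + a * b : ℝ) / (a * b * c) ≤ 1 :=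
    (div_le_one (by positivity)).2 (mod_cast h)
  rw [le_sub_iff_add_le, hsum]
  exact mul_le_of_le_one_right Real.pi_pos.le hle

/-- **Parabolic and hyperbolic cases**: if `a, b, c ≥ 2` and
`1/a + 1/b + 1/c ≤ 1`, then the triangle group `T(a,b,c)` is infinite. -/
theorem triangleGroup_infinite (a b c : ℕ)
    (ha : 2 ≤ a) (hb : 2 ≤ b) (hc : 2 ≤ c)
    (h : b * c + a * c + a * b ≤ a * b * c) :
    Infinite (TriangleGroup a b c) := by
  have hangle {n : ℕ} (hn : 2 ≤ n) : π / n ∈ Set.Ioo 0 π :=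
    ⟨by positivity, div_lt_self Real.pi_pos (mod_cast hn)⟩
  have hγ : π - π / c ∈ Set.Ioo 0 π :=
    ⟨sub_pos.2 (hangle hc).2, sub_lt_self _ (hangle hc).1⟩
  obtain ⟨X, Y, hX, hY, hXY, hcomm⟩ := exists_SL2_trace_eq_two_mul_cos (hangle ha).1.le
    (hangle hb).1.le (pi_div_add_pi_div_le (by lia) (by lia) (by lia) h) hγ
  refine TriangleGroup.infinite_of_not_isOfFinOrder_commutator
    (PSL2_pow_eq_one_of_trace_eq_two_mul_cos hX (Real.sin_pos_of_mem_Ioo (hangle ha)).ne' ?_)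
    (PSL2_pow_eq_one_of_trace_eq_two_mul_cos hY (Real.sin_pos_of_mem_Ioo (hangle hb)).ne' ?_)
    (PSL2_pow_eq_one_of_trace_eq_two_mul_cos hXY (Real.sin_pos_of_mem_Ioo hγ).ne' ?_) hcomm
  · rw [mul_div_cancel₀ _ (by positivity), Real.sin_pi]
  · rw [mul_div_cancel₀ _ (by positivity), Real.sin_pi]
  · rw [mul_sub, mul_div_cancel₀ _ (by positivity), Real.sin_sub_pi, Real.sin_nat_mul_pi, neg_zero]
end
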